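/- arXiv:2204.02913 — 2 statements merged into one kernel-verified Lean document; each statement's English description precedes it below -/
import Mathlib

section
/- For any positive integer k, the domination ratio of Γ(ℤ, {1, 3k+1}) equals (k+1)/(3k+2), and the domination ratio of Γ(ℤ, {1, -3k}) also equals (k+1)/(3k+2). -/
open Filter

/-- Lower density of a set of integers. -/
noncomputable def lowerDensity (D : Set ℤ) : ℝ :=
  Filter.liminf (fun n : ℕ =>
    ((D ∩ Set.Icc (-(n : ℤ)) (n : ℤ)).ncard : ℝ) / (2 * (n : ℝ) + 1)) Filter.atTop

/-- `D` is a dominating set of the integer distance digraph `Γ(ℤ,S)`. -/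
def Dominating (S D : Set ℤ) : Prop :=
  ∀ m : ℤ, m ∈ D ∨ ∃ u ∈ D, ∃ s ∈ S, m = u + s

/-- Domination ratio of `Γ(ℤ,S)`. -/
noncomputable def dominationRatio (S : Set ℤ) : ℝ :=
  sInf (lowerDensity '' {D : Set ℤ | Dominating S D})

/-- `D` is an efficient dominating set of `Γ(ℤ,S)`: every integer is dominated
by exactly one element of `D`. -/
def EffDominating (S D : Set ℤ) : Prop :=
  ∀ m : ℤ, ∃! u, u ∈ D ∧ (u = m ∨ m - u ∈ S)

/-- The sum of `f` over the `M` consecutive integers starting at `x`. -/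
def windowSum (f : ℤ → ℤ) (x : ℤ) (M : ℕ) : ℤ :=
  ∑ i ∈ Finset.range M, f (x + i)

lemma windowSum_add_one (f : ℤ → ℤ) (x : ℤ) (M : ℕ) :
    windowSum f (x + 1) M = windowSum f x M + f (x + M) - f x := by
  have h1 : windowSum f x (M + 1) = windowSum f x M + f (x + M) :=
    Finset.sum_range_succ _ _
  have h2 : windowSum f x (M + 1) = windowSum f (x + 1) M + f x := by
    unfold windowSum
    rw [Finset.sum_range_succ']
    congr 1
    · refine Finset.sum_congr rfl fun i _ => congrArg f ?_
      push_cast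
      ring
    · simp
  linarith

lemma windowSum_nonneg {f : ℤ → ℤ} (h0 : ∀ x, 0 ≤ f x) (x : ℤ) (M : ℕ) :
    0 ≤ windowSum f x M :=
  Finset.sum_nonneg fun _ _ => h0 _

lemma windowSum_le {f : ℤ → ℤ} {B : ℤ} (h1 : ∀ x, f x ≤ B) (x : ℤ) (M : ℕ) :
    windowSum f x M ≤ M * B := by
  have := Finset.sum_le_card_nsmul (Finset.range M) (fun i : ℕ => f (x + i)) B fun _ _ => h1 _
  simpa [windowSum] using this

/-- Shifting a window by `j` changes the sum of a function with values in `[0, B]` by at most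
`j * B`. -/
lemma abs_windowSum_add_sub_le {f : ℤ → ℤ} {B : ℤ} (h0 : ∀ x, 0 ≤ f x) (h1 : ∀ x, f x ≤ B)
    (x : ℤ) (M j : ℕ) : |windowSum f (x + j) M - windowSum f x M| ≤ j * B := by
  induction j with
  | zero => simp
  | succ j ih =>
    have h := windowSum_add_one f (x + j) M
    have e : x + ((j + 1 : ℕ) : ℤ) = x + j + 1 := by push_cast; ring
    rw [e, h]
    rw [abs_le] at ih ⊢
    have := h0 (x + j)
    have := h1 (x + j)
    have := h0 (x + j + M)
    have := h1 (x + j + M)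
    push_cast
    constructor <;> linarith [ih.1, ih.2]

lemma windowSum_windowSum_comm (f : ℤ → ℤ) (x : ℤ) (n M : ℕ) :
    windowSum (fun a => windowSum f a n) x M = windowSum (fun a => windowSum f a M) x n := by
  unfold windowSum
  rw [Finset.sum_comm]
  refine Finset.sum_congr rfl fun i _ => Finset.sum_congr rfl fun j _ => congrArg f ?_
  ring

lemma abs_windowSum_windowSum_sub_le {f : ℤ → ℤ} (h0 : ∀ x, 0 ≤ f x) (h1 : ∀ x, f x ≤ 1)
    (x : ℤ) (n M : ℕ) :
    |windowSum (fun a => windowSum f a n) x M - n * windowSum f x M| ≤ n * n := by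
  rw [windowSum_windowSum_comm]
  have e : windowSum (fun a => windowSum f a M) x n - n * windowSum f x M
      = ∑ j ∈ Finset.range n, (windowSum f (x + j) M - windowSum f x M) := by
    simp [windowSum, Finset.sum_sub_distrib]
  rw [e]
  refine (Finset.abs_sum_le_sum_abs _ _).trans ?_
  have := Finset.sum_le_card_nsmul (Finset.range n)
    (fun j : ℕ => |windowSum f (x + j) M - windowSum f x M|) n ?_
  · simpa using this
  · intro j hj
    have := abs_windowSum_add_sub_le h0 h1 x M j
    have := Finset.mem_range.1 hj
    omega

/-- If the negative part of `h` at `a` is compensated by its positive part at `a - s`, then the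
window sums of `h` are bounded below. -/
lemma neg_le_windowSum_of_neg_le {h : ℤ → ℤ} {B : ℤ} (hB : ∀ a, h a ≤ B) (hB0 : 0 ≤ B) (s : ℕ)
    (hs : ∀ a, h a < 0 → 0 ≤ h a + h (a - s)) (x : ℤ) (M : ℕ) :
    -(s * B) ≤ windowSum h x M := by
  let p : ℤ → ℤ := fun a => max (h a) 0
  have hp := abs_windowSum_add_sub_le (f := p) (B := B) (fun a => le_max_right _ _)
    (fun a => max_le (hB a) hB0) (x - s) M s
  rw [sub_add_cancel, abs_le] at hp
  have key : windowSum p x M - windowSum p (x - s) M ≤ windowSum h x M := by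
    unfold windowSum
    rw [← Finset.sum_sub_distrib]
    refine Finset.sum_le_sum fun i _ => ?_
    have := hs (x + i)
    have e : x - s + (i : ℤ) = x + i - s := by ring
    simp only [p, e]
    omega
  linarith [hp.1]

section Domination

variable {f : ℤ → ℤ} {k : ℕ}

lemma windowSum_three_eq (f : ℤ → ℤ) (s : ℤ) (a : ℤ) (n : ℕ) :
    windowSum f a n + windowSum f (a - 1) n + windowSum f (a - s) n
      = ∑ i ∈ Finset.range n, (f (a + i) + f (a + i - 1) + f (a + i - s)) := by
  unfold windowSum
  rw [← Finset.sum_add_distrib, ← Finset.sum_add_distrib]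
  refine Finset.sum_congr rfl fun i _ => ?_
  congr 2
  · congr 1
    ring_nf
  · ring_nf

lemma le_windowSum_three {s : ℤ} (hd : ∀ m, 1 ≤ f m + f (m - 1) + f (m - s)) (a : ℤ) (n : ℕ) :
    (n : ℤ) ≤ windowSum f a n + windowSum f (a - 1) n + windowSum f (a - s) n := by
  rw [windowSum_three_eq]
  have := Finset.card_nsmul_le_sum (Finset.range n)
    (fun i : ℕ => f (a + i) + f (a + i - 1) + f (a + i - s)) 1 fun i _ => hd _
  simpa using this

lemma lt_windowSum_three {s : ℤ} (hd : ∀ m, 1 ≤ f m + f (m - 1) + f (m - s)) (a : ℤ) (n j : ℕ)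
    (hj : j < n) (h2 : 2 ≤ f (a + j) + f (a + j - 1) + f (a + j - s)) :
    (n : ℤ) < windowSum f a n + windowSum f (a - 1) n + windowSum f (a - s) n := by
  rw [windowSum_three_eq]
  have := Finset.sum_lt_sum (s := Finset.range n) (f := fun _ => (1 : ℤ))
    (g := fun i : ℕ => f (a + i) + f (a + i - 1) + f (a + i - s)) (fun i _ => hd _)
    ⟨j, Finset.mem_range.2 hj, by omega⟩
  simpa using this

/-- A window of length `3 * k + 2` with fewer than `k + 1` points is compensated by the window
`3 * k + 1` places to its left. -/
lemma windowSum_compensate (h0 : ∀ x, 0 ≤ f x) (h1 : ∀ x, f x ≤ 1)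
    (hd : ∀ m, 1 ≤ f m + f (m - 1) + f (m - (3 * k + 1 : ℕ))) (a : ℤ)
    (ha : windowSum f a (3 * k + 2) - (k + 1) < 0) :
    0 ≤ windowSum f a (3 * k + 2) - (k + 1) +
      (windowSum f (a - (3 * k + 1 : ℕ)) (3 * k + 2) - (k + 1)) := by
  have hle := le_windowSum_three hd a (3 * k + 2)
  have hstep := windowSum_add_one f (a - 1) (3 * k + 2)
  rw [sub_add_cancel] at hstep
  have b1 := h0 (a - 1)
  have b2 := h1 (a - 1)
  have b3 := h0 (a - 1 + (3 * k + 2 : ℕ))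
  have b4 := h1 (a - 1 + (3 * k + 2 : ℕ))
  by_cases hlt : windowSum f (a - 1) (3 * k + 2) ≤ k
  · push_cast at *
    omega
  have u1 : f (a - 1) = 1 := by omega
  have u2 : f (a - 1 + (3 * k + 2 : ℕ)) = 0 := by omega
  have hexc : ((3 * k + 2 : ℕ) : ℤ) < windowSum f a (3 * k + 2) +
      windowSum f (a - 1) (3 * k + 2) + windowSum f (a - (3 * k + 1 : ℕ)) (3 * k + 2) := by
    by_cases ha1 : f a = 1
    · refine lt_windowSum_three hd a _ 0 (by omega) ?_
      have := h0 (a - (3 * k + 1 : ℕ))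
      simp only [Nat.cast_zero, add_zero]
      omega
    · refine lt_windowSum_three hd a _ (3 * k) (by omega) ?_
      have c := hd (a - 1 + (3 * k + 2 : ℕ))
      have e1 : a - 1 + ((3 * k + 2 : ℕ) : ℤ) - 1 = a + (3 * k : ℕ) := by push_cast; ring
      have e2 : a - 1 + ((3 * k + 2 : ℕ) : ℤ) - (3 * k + 1 : ℕ) = a := by push_cast; ring
      have e3 : a + ((3 * k : ℕ) : ℤ) - (3 * k + 1 : ℕ) = a - 1 := by push_cast; ring
      rw [e1, e2] at c
      rw [e3]
      have := h0 a
      have := h1 a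
      have := h0 (a + (3 * k : ℕ) - 1)
      omega
  push_cast at *
  omega

lemma le_mul_windowSum_of_dominating (h0 : ∀ x, 0 ≤ f x) (h1 : ∀ x, f x ≤ 1)
    (hd : ∀ m, 1 ≤ f m + f (m - 1) + f (m - (3 * k + 1 : ℕ))) (x : ℤ) (M : ℕ) :
    ((k : ℤ) + 1) * M - 2 * (3 * k + 2) ^ 2 ≤ (3 * k + 2) * windowSum f x M := by
  have hA := (abs_le.1 (abs_windowSum_windowSum_sub_le h0 h1 x (3 * k + 2) M)).2
  have hB := neg_le_windowSum_of_neg_le (h := fun a => windowSum f a (3 * k + 2) - (k + 1))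
    (B := 3 * k + 2) (fun a => ?_) (by positivity) (3 * k + 1)
    (windowSum_compensate h0 h1 hd) x M
  · have e : windowSum (fun a => windowSum f a (3 * k + 2) - (k + 1)) x M
        = windowSum (fun a => windowSum f a (3 * k + 2)) x M - M * (k + 1) := by
      simp [windowSum, Finset.sum_sub_distrib]
    rw [e] at hB
    push_cast at hA hB
    nlinarith
  · have := windowSum_le h1 a (3 * k + 2)
    push_cast at this ⊢
    omega

end Domination

open Classical in
/-- The integer-valued indicator function of `D`. -/
noncomputable def intIndicator (D : Set ℤ) (x : ℤ) : ℤ := if x ∈ D then 1 else 0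

lemma intIndicator_nonneg (D : Set ℤ) (x : ℤ) : 0 ≤ intIndicator D x := by
  unfold intIndicator; split_ifs <;> simp

lemma intIndicator_le_one (D : Set ℤ) (x : ℤ) : intIndicator D x ≤ 1 := by
  unfold intIndicator; split_ifs <;> simp

lemma intIndicator_of_mem {D : Set ℤ} {x : ℤ} (h : x ∈ D) : intIndicator D x = 1 := if_pos h

lemma ncard_inter_Icc (D : Set ℤ) (N : ℕ) :
    ((D ∩ Set.Icc (-(N : ℤ)) N).ncard : ℤ) = windowSum (intIndicator D) (-N) (2 * N + 1) := by
  classical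
  have e : D ∩ Set.Icc (-(N : ℤ)) N = (((Finset.range (2 * N + 1)).filter
      fun i : ℕ => -(N : ℤ) + i ∈ D).image fun i : ℕ => -(N : ℤ) + i : Finset ℤ) := by
    ext x
    simp only [Set.mem_inter_iff, Set.mem_Icc, Finset.coe_image, Finset.coe_filter,
      Finset.mem_range, Set.mem_image, Set.mem_ofPred_eq]
    constructor
    · rintro ⟨hx, h1, h2⟩
      have e : -(N : ℤ) + (x + N).toNat = x := by omega
      exact ⟨(x + N).toNat, ⟨by omega, by rwa [e]⟩, e⟩
    · rintro ⟨i, ⟨hi, hm⟩, rfl⟩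
      exact ⟨hm, by omega, by omega⟩
  rw [e, Set.ncard_coe_finset, Finset.card_image_of_injective _ (fun a b h => by simpa using h),
    Finset.card_filter]
  push_cast
  unfold windowSum intIndicator
  refine Finset.sum_congr rfl fun i _ => ?_
  congr

lemma tendsto_const_add_div_window (ρ C : ℝ) :
    Filter.Tendsto (fun N : ℕ => ρ + C / (2 * (N : ℝ) + 1)) Filter.atTop (nhds ρ) := by
  have h : Filter.Tendsto (fun N : ℕ => 2 * (N : ℝ) + 1) Filter.atTop Filter.atTop :=
    Filter.tendsto_atTop_add_const_right _ _
      (tendsto_natCast_atTop_atTop.const_mul_atTop (by norm_num))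
  simpa using tendsto_const_nhds.add (h.const_div_atTop C)

lemma windowDensity_nonneg (D : Set ℤ) (N : ℕ) :
    (0 : ℝ) ≤ ((D ∩ Set.Icc (-(N : ℤ)) (N : ℤ)).ncard : ℝ) / (2 * (N : ℝ) + 1) := by
  positivity

lemma windowDensity_le_one (D : Set ℤ) (N : ℕ) :
    ((D ∩ Set.Icc (-(N : ℤ)) (N : ℤ)).ncard : ℝ) / (2 * (N : ℝ) + 1) ≤ 1 := by
  rw [div_le_one (by positivity)]
  have h := ncard_inter_Icc D N
  have := windowSum_le (intIndicator_le_one D) (-N) (2 * N + 1)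
  rw [← h] at this
  push_cast at this
  have h2 : ((((D ∩ Set.Icc (-(N : ℤ)) (N : ℤ)).ncard : ℤ)) : ℝ) ≤ ((2 * N + 1 : ℤ) : ℝ) := by
    exact_mod_cast (by linarith)
  simpa using h2

lemma isBoundedUnder_ge_windowDensity (D : Set ℤ) :
    Filter.IsBoundedUnder (· ≥ ·) Filter.atTop (fun N : ℕ =>
      ((D ∩ Set.Icc (-(N : ℤ)) (N : ℤ)).ncard : ℝ) / (2 * (N : ℝ) + 1)) :=
  Filter.isBoundedUnder_of ⟨0, windowDensity_nonneg D⟩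

lemma isBoundedUnder_le_windowDensity (D : Set ℤ) :
    Filter.IsBoundedUnder (· ≤ ·) Filter.atTop (fun N : ℕ =>
      ((D ∩ Set.Icc (-(N : ℤ)) (N : ℤ)).ncard : ℝ) / (2 * (N : ℝ) + 1)) :=
  Filter.isBoundedUnder_of ⟨1, windowDensity_le_one D⟩

lemma lowerDensity_nonneg (D : Set ℤ) : 0 ≤ lowerDensity D :=
  Filter.le_liminf_of_le (isBoundedUnder_le_windowDensity D).isCoboundedUnder_ge
    (Filter.Eventually.of_forall (windowDensity_nonneg D))

lemma le_lowerDensity {D : Set ℤ} {p q C : ℤ} (hq : 0 < q)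
    (h : ∀ N : ℕ, p * (2 * N + 1) - C ≤
      q * windowSum (intIndicator D) (-N) (2 * N + 1)) :
    (p : ℝ) / q ≤ lowerDensity D := by
  have ht := tendsto_const_add_div_window ((p : ℝ) / q) (-(C : ℝ) / q)
  rw [← ht.liminf_eq]
  refine Filter.liminf_le_liminf (Filter.Eventually.of_forall fun N => ?_)
    ht.isBoundedUnder_ge (isBoundedUnder_le_windowDensity D).isCoboundedUnder_ge
  have hN := h N
  rw [← ncard_inter_Icc] at hN
  have hN' : (p : ℝ) * (2 * N + 1) - C ≤ q * ((D ∩ Set.Icc (-(N : ℤ)) (N : ℤ)).ncard : ℝ) := by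
    exact_mod_cast hN
  have hq' : (0 : ℝ) < q := by exact_mod_cast hq
  have hM : (0 : ℝ) < 2 * N + 1 := by positivity
  rw [le_div_iff₀ hM]
  have e : ((p : ℝ) / q + -(C : ℝ) / q / (2 * N + 1)) * (2 * N + 1)
      = (p * (2 * N + 1) - C) / q := by
    field_simp
    ring
  rw [e, div_le_iff₀ hq']
  linarith

lemma lowerDensity_le {D : Set ℤ} {p q C : ℤ} (hq : 0 < q)
    (h : ∀ N : ℕ, q * windowSum (intIndicator D) (-N) (2 * N + 1) ≤ p * (2 * N + 1) + C) :
    lowerDensity D ≤ (p : ℝ) / q := by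
  have ht := tendsto_const_add_div_window ((p : ℝ) / q) ((C : ℝ) / q)
  rw [← ht.liminf_eq]
  refine Filter.liminf_le_liminf (Filter.Eventually.of_forall fun N => ?_)
    (isBoundedUnder_ge_windowDensity D) ht.isBoundedUnder_le.isCoboundedUnder_ge
  have hN := h N
  rw [← ncard_inter_Icc] at hN
  have hN' : q * ((D ∩ Set.Icc (-(N : ℤ)) (N : ℤ)).ncard : ℝ) ≤ (p : ℝ) * (2 * N + 1) + C := by
    exact_mod_cast hN
  have hq' : (0 : ℝ) < q := by exact_mod_cast hq
  have hM : (0 : ℝ) < 2 * N + 1 := by positivity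
  rw [div_le_iff₀ hM]
  have e : ((p : ℝ) / q + (C : ℝ) / q / (2 * N + 1)) * (2 * N + 1)
      = (p * (2 * N + 1) + C) / q := by
    field_simp
  rw [e, le_div_iff₀ hq']
  linarith

lemma dominating_pair_iff {s t : ℤ} {D : Set ℤ} :
    Dominating {s, t} D ↔ ∀ m, m ∈ D ∨ m - s ∈ D ∨ m - t ∈ D := by
  refine forall_congr' fun m => or_congr_right ?_
  constructor
  · rintro ⟨u, hu, v, rfl | rfl, rfl⟩
    · left; simpa using hu
    · right; simpa using hu
  · rintro (h | h)
    · exact ⟨_, h, s, by simp, by ring⟩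
    · exact ⟨_, h, t, by simp, by ring⟩

lemma one_le_intIndicator_add {D : Set ℤ} {a b c : ℤ} (h : a ∈ D ∨ b ∈ D ∨ c ∈ D) :
    1 ≤ intIndicator D a + intIndicator D b + intIndicator D c := by
  have := intIndicator_nonneg D a
  have := intIndicator_nonneg D b
  have := intIndicator_nonneg D c
  rcases h with h | h | h <;> have := intIndicator_of_mem h <;> omega

/-- The periodic set of the integers whose residue modulo `3 * k + 2` is a multiple of `3`. -/
def periodicDominatingSet (k : ℕ) : Set ℤ := {x | 3 ∣ x % (3 * k + 2)}

lemma add_mem_periodicDominatingSet {k : ℕ} {m j : ℤ} (h0 : 0 ≤ m % (3 * k + 2) + j)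
    (h1 : m % (3 * k + 2) + j < 3 * k + 2) (h3 : 3 ∣ m % (3 * k + 2) + j) :
    m + j ∈ periodicDominatingSet k := by
  have : (m + j) % (3 * k + 2) = m % (3 * k + 2) + j := by
    rw [← Int.emod_add_emod, Int.emod_eq_of_lt h0 h1]
  simpa [periodicDominatingSet, this] using h3

lemma add_period_mem_periodicDominatingSet {k : ℕ} {x : ℤ} :
    x + (3 * k + 2) ∈ periodicDominatingSet k ↔ x ∈ periodicDominatingSet k := by
  simp [periodicDominatingSet]

lemma dominating_periodicDominatingSet_pos (k : ℕ) :
    Dominating {1, 3 * (k : ℤ) + 1} (periodicDominatingSet k) := by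
  rw [dominating_pair_iff]
  intro m
  have hr0 := Int.emod_nonneg m (show (3 * (k : ℤ) + 2) ≠ 0 by positivity)
  have hr1 := Int.emod_lt_of_pos m (show 0 < (3 * (k : ℤ) + 2) by positivity)
  obtain h | h | h : m % (3 * k + 2) % 3 = 0 ∨ m % (3 * k + 2) % 3 = 1 ∨
      m % (3 * k + 2) % 3 = 2 := by omega
  · left
    simpa using add_mem_periodicDominatingSet (k := k) (m := m) (j := 0)
      (by omega) (by omega) (by omega)
  · right; left
    exact add_mem_periodicDominatingSet (j := -1) (by omega) (by omega) (by omega)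
  · right; right
    rw [← add_period_mem_periodicDominatingSet]
    have e : m - (3 * (k : ℤ) + 1) + (3 * k + 2) = m + 1 := by ring
    rw [e]
    exact add_mem_periodicDominatingSet (by omega) (by omega) (by omega)

lemma dominating_periodicDominatingSet_neg (k : ℕ) :
    Dominating {1, -3 * (k : ℤ)} (periodicDominatingSet k) := by
  rw [dominating_pair_iff]
  intro m
  have hr0 := Int.emod_nonneg m (show (3 * (k : ℤ) + 2) ≠ 0 by positivity)
  have hr1 := Int.emod_lt_of_pos m (show 0 < (3 * (k : ℤ) + 2) by positivity)
  obtain h | h | h : m % (3 * k + 2) % 3 = 0 ∨ m % (3 * k + 2) % 3 = 1 ∨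
      m % (3 * k + 2) % 3 = 2 := by omega
  · left
    simpa using add_mem_periodicDominatingSet (k := k) (m := m) (j := 0)
      (by omega) (by omega) (by omega)
  · right; left
    exact add_mem_periodicDominatingSet (j := -1) (by omega) (by omega) (by omega)
  · right; right
    have e : m - -3 * (k : ℤ) = m + -2 + (3 * k + 2) := by ring
    rw [e, add_period_mem_periodicDominatingSet]
    exact add_mem_periodicDominatingSet (by omega) (by omega) (by omega)

lemma sum_range_ite_three_dvd (k : ℕ) :
    ∑ i ∈ Finset.range (3 * k + 2), (if 3 ∣ i then (1 : ℤ) else 0) = k + 1 := by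
  induction k with
  | zero => rfl
  | succ k ih =>
    rw [show 3 * (k + 1) + 2 = 3 * k + 2 + 1 + 1 + 1 by ring, Finset.sum_range_succ,
      Finset.sum_range_succ, Finset.sum_range_succ, ih, if_neg (by omega), if_pos (by omega),
      if_neg (by omega)]
    push_cast
    ring

lemma windowSum_periodicDominatingSet (k : ℕ) (a : ℤ) :
    windowSum (intIndicator (periodicDominatingSet k)) a (3 * k + 2) = k + 1 := by
  have hstep : ∀ a : ℤ, windowSum (intIndicator (periodicDominatingSet k)) (a + 1) (3 * k + 2)
      = windowSum (intIndicator (periodicDominatingSet k)) a (3 * k + 2) := by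
    intro a
    rw [windowSum_add_one]
    have : intIndicator (periodicDominatingSet k) (a + (3 * k + 2 : ℕ))
        = intIndicator (periodicDominatingSet k) a := by
      have hp := add_period_mem_periodicDominatingSet (k := k) (x := a)
      push_cast
      unfold intIndicator
      congr 1
      exact propext hp
    rw [this]
    ring
  induction a using Int.induction_on with
  | zero =>
    rw [← sum_range_ite_three_dvd k]
    unfold windowSum intIndicator
    refine Finset.sum_congr rfl fun i hi => ?_
    have hi := Finset.mem_range.1 hi
    have : (i : ℤ) % (3 * k + 2) = i := Int.emod_eq_of_lt (by omega) (by omega)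
    have h2 : (0 : ℤ) + i ∈ periodicDominatingSet k ↔ 3 ∣ i := by
      rw [zero_add, periodicDominatingSet, Set.mem_ofPred_eq, this]
      omega
    simp only [h2]
  | succ i ih => rw [hstep, ih]
  | pred i ih => rw [← hstep, sub_add_cancel, ih]

lemma lowerDensity_periodicDominatingSet_le (k : ℕ) :
    lowerDensity (periodicDominatingSet k) ≤ ((k : ℝ) + 1) / (3 * (k : ℝ) + 2) := by
  have := lowerDensity_le (D := periodicDominatingSet k) (p := k + 1) (q := 3 * k + 2)
    (C := (3 * k + 2) * (3 * k + 2)) (by positivity) fun N => ?_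
  · simpa using this
  · have h := (abs_le.1 (abs_windowSum_windowSum_sub_le (intIndicator_nonneg
      (periodicDominatingSet k)) (intIndicator_le_one _) (-N) (3 * k + 2) (2 * N + 1))).1
    simp only [windowSum_periodicDominatingSet] at h
    have e : windowSum (fun _ => (k : ℤ) + 1) (-N) (2 * N + 1) = (2 * N + 1) * (k + 1) := by
      simp [windowSum]
    rw [e] at h
    push_cast at h
    linarith

lemma le_lowerDensity_of_dominating_pos {k : ℕ} {D : Set ℤ}
    (hD : Dominating {1, 3 * (k : ℤ) + 1} D) :
    ((k : ℝ) + 1) / (3 * (k : ℝ) + 2) ≤ lowerDensity D := by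
  rw [dominating_pair_iff] at hD
  have := le_lowerDensity (D := D) (p := k + 1) (q := 3 * k + 2)
    (C := 2 * (3 * k + 2) ^ 2) (by positivity) fun N => ?_
  · simpa using this
  · have := le_mul_windowSum_of_dominating (k := k) (intIndicator_nonneg D)
      (intIndicator_le_one D) (fun m => one_le_intIndicator_add ?_) (-N) (2 * N + 1)
    · simpa using this
    · simpa using hD m

lemma le_lowerDensity_of_dominating_neg {k : ℕ} {D : Set ℤ}
    (hD : Dominating {1, -3 * (k : ℤ)} D) :
    ((k : ℝ) + 1) / (3 * (k : ℝ) + 2) ≤ lowerDensity D := by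
  rw [dominating_pair_iff] at hD
  have := le_lowerDensity (D := D) (p := k + 1) (q := 3 * k + 2)
    (C := 2 * (3 * k + 2) ^ 2) (by positivity) fun N => ?_
  · simpa using this
  · have := le_mul_windowSum_of_dominating (k := k) (f := fun y => intIndicator D (-y - 1))
      (fun _ => intIndicator_nonneg D _) (fun _ => intIndicator_le_one D _)
      (fun m => one_le_intIndicator_add ?_) (-N - 1) (2 * N + 1)
    · have e : windowSum (fun y => intIndicator D (-y - 1)) (-N - 1) (2 * N + 1)
          = windowSum (intIndicator D) (-N) (2 * N + 1) := by
        unfold windowSum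
        rw [← Finset.sum_range_reflect]
        refine Finset.sum_congr rfl fun i hi => congrArg (intIndicator D) ?_
        have := Finset.mem_range.1 hi
        omega
      rw [e] at this
      simpa using this
    · have h := hD (-m)
      have e1 : -(m - 1) - 1 = -m := by ring
      have e2 : -(m - (3 * k + 1 : ℕ)) - 1 = -m - -3 * (k : ℤ) := by push_cast; ring
      rw [e1, e2]
      tauto

lemma dominationRatio_eq {S D : Set ℤ} {ρ : ℝ} (hD : Dominating S D) (hle : lowerDensity D ≤ ρ)
    (hge : ∀ D', Dominating S D' → ρ ≤ lowerDensity D') : dominationRatio S = ρ := by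
  have hbdd : BddBelow (lowerDensity '' {D : Set ℤ | Dominating S D}) := by
    refine ⟨0, ?_⟩
    rintro _ ⟨D', -, rfl⟩
    exact lowerDensity_nonneg D'
  refine le_antisymm ((csInf_le hbdd ⟨D, hD, rfl⟩).trans hle) (le_csInf ⟨_, D, hD, rfl⟩ ?_)
  rintro _ ⟨D', hD', rfl⟩
  exact hge D' hD'

theorem stmt_10 (k : ℤ) (hk : 1 ≤ k) :
    dominationRatio {1, 3 * k + 1} = ((k : ℝ) + 1) / (3 * (k : ℝ) + 2) ∧
      dominationRatio {1, -3 * k} = ((k : ℝ) + 1) / (3 * (k : ℝ) + 2) := by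
  lift k to ℕ using by omega
  rw [Int.cast_natCast]
  exact ⟨dominationRatio_eq (dominating_periodicDominatingSet_pos k)
      (lowerDensity_periodicDominatingSet_le k) fun _ => le_lowerDensity_of_dominating_pos,
    dominationRatio_eq (dominating_periodicDominatingSet_neg k)
      (lowerDensity_periodicDominatingSet_le k) fun _ => le_lowerDensity_of_dominating_neg⟩
end

section
/- For any positive integer k, the domination ratio of Γ(ℤ, {1, 3k}) equals 2k/(6k-1), and the domination ratio of Γ(ℤ, {1, -3k+1}) also equals 2k/(6k-1) (for k ≥ 2 in the latter case so that -3k+1 ∉ {0,1}). -/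
open Filter

section WindowCount

open Classical in
/-- The number of integers in `[-n, n]` satisfying `P`. -/
noncomputable def windowCount (n : ℕ) (P : ℤ → Prop) : ℤ :=
  ((Finset.Icc (-(n : ℤ)) n).filter P).card

variable {n : ℕ} {P Q R : ℤ → Prop}

lemma windowCount_mono (h : ∀ m, P m → Q m) : windowCount n P ≤ windowCount n Q := by
  classical
  unfold windowCount
  exact_mod_cast Finset.card_le_card (Finset.monotone_filter_right _ fun m _ => h m)

lemma windowCount_nonneg : 0 ≤ windowCount n P := by
  unfold windowCount
  positivity

lemma windowCount_true : windowCount n (fun _ => True) = 2 * n + 1 := by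
  simp only [windowCount, Finset.filter_true, Int.card_Icc]
  omega

lemma windowCount_or_le (h : ∀ m, P m → Q m ∨ R m) :
    windowCount n P ≤ windowCount n Q + windowCount n R := by
  classical
  refine (windowCount_mono h).trans ?_
  unfold windowCount
  have h : ((Finset.Icc (-(n : ℤ)) n).filter fun m => Q m ∨ R m) =
      (Finset.Icc (-(n : ℤ)) n).filter Q ∪ (Finset.Icc (-(n : ℤ)) n).filter R := by
    ext m
    simp only [Finset.mem_union, Finset.mem_filter, and_or_left]
  rw [Finset.filter_congr_decidable, h]
  exact_mod_cast Finset.card_union_le _ _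

lemma windowCount_add_windowCount_not (P Q : ℤ → Prop) :
    windowCount n (fun m => P m ∧ Q m) + windowCount n (fun m => P m ∧ ¬ Q m) =
      windowCount n P := by
  classical
  unfold windowCount
  have h := Finset.card_filter_add_card_filter_not (s := (Finset.Icc (-(n : ℤ)) n).filter P) Q
  rw [Finset.filter_filter, Finset.filter_filter] at h
  rw [← h, Nat.cast_add]
  congr!

lemma windowCount_shift_le (P : ℤ → Prop) (t : ℤ) :
    windowCount n (fun m => P (m + t)) ≤ windowCount n P + |t| := by
  classical
  unfold windowCount
  have hsub : ((Finset.Icc (-(n : ℤ)) n).filter fun m => P (m + t)).image (· + t) ⊆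
      (Finset.Icc (-(n : ℤ)) n).filter P ∪ (Finset.Ioc (n : ℤ) (n + t) ∪
        Finset.Ico (-(n : ℤ) + t) (-n)) := by
    intro m hm
    simp only [Finset.mem_image, Finset.mem_filter, Finset.mem_Icc, Finset.mem_union,
      Finset.mem_Ioc, Finset.mem_Ico] at hm ⊢
    obtain ⟨x, ⟨hx, hP⟩, rfl⟩ := hm
    by_cases hmem : -(n : ℤ) ≤ x + t ∧ x + t ≤ n
    · exact Or.inl ⟨hmem, hP⟩
    · omega
  have hcard := Finset.card_le_card hsub
  rw [Finset.card_image_of_injective _ (add_left_injective t)] at hcard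
  have h₁ := Finset.card_union_le ((Finset.Icc (-(n : ℤ)) n).filter P)
    (Finset.Ioc (n : ℤ) (n + t) ∪ Finset.Ico (-(n : ℤ) + t) (-n))
  have h₂ := Finset.card_union_le (Finset.Ioc (n : ℤ) (n + t)) (Finset.Ico (-(n : ℤ) + t) (-n))
  rw [Int.card_Ioc, Int.card_Ico] at h₂
  rcases abs_cases t with ht | ht <;> omega

lemma windowCount_le_shift (P : ℤ → Prop) (t : ℤ) :
    windowCount n P ≤ windowCount n (fun m => P (m + t)) + |t| := by
  simpa using windowCount_shift_le (n := n) (fun m => P (m + t)) (-t)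

lemma windowCount_exists_lt_le (P : ℕ → ℤ → Prop) (k : ℕ) :
    windowCount n (fun m => ∃ j < k, P j m) ≤ ∑ j ∈ Finset.range k, windowCount n (P j) := by
  induction k with
  | zero => simp [windowCount]
  | succ k ih =>
    rw [Finset.sum_range_succ]
    refine (windowCount_or_le (Q := fun m => ∃ j < k, P j m) (R := P k) ?_).trans
      (by linarith)
    rintro m ⟨j, hj, hm⟩
    rcases Nat.lt_succ_iff_lt_or_eq.mp hj with h | rfl
    · exact Or.inl ⟨j, h, hm⟩
    · exact Or.inr hm

lemma windowCount_dvd_le {p : ℤ} (hp : 0 < p) :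
    p * windowCount n (fun m => p ∣ m) ≤ 2 * n + 1 + p := by
  classical
  have hIoc : Finset.Icc (-(n : ℤ)) n = Finset.Ioc (-(n : ℤ) - 1) n := by
    ext m
    simp only [Finset.mem_Icc, Finset.mem_Ioc]
    omega
  unfold windowCount
  rw [Finset.filter_congr_decidable, hIoc, Int.Ioc_filter_dvd_card _ _ hp]
  have hp' : (0 : ℚ) < p := by exact_mod_cast hp
  have h₁ := Int.floor_le (((n : ℤ) : ℚ) / (p : ℚ))
  have h₂ := Int.lt_floor_add_one (((-(n : ℤ) - 1 : ℤ) : ℚ) / (p : ℚ))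
  rw [le_div_iff₀ hp'] at h₁
  rw [div_lt_iff₀ hp'] at h₂
  have h₁' : ⌊((n : ℤ) : ℚ) / (p : ℚ)⌋ * p ≤ n := by exact_mod_cast h₁
  have h₂' : (-(n : ℤ) - 1) < (⌊((-(n : ℤ) - 1 : ℤ) : ℚ) / (p : ℚ)⌋ + 1) * p := by
    exact_mod_cast h₂
  rcases max_cases (⌊((n : ℤ) : ℚ) / (p : ℚ)⌋ - ⌊((-(n : ℤ) - 1 : ℤ) : ℚ) / (p : ℚ)⌋) 0 with
    h | h <;> rw [h.1] <;> nlinarith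

lemma ncard_inter_Icc_eq_windowCount (D : Set ℤ) (n : ℕ) :
    (((D ∩ Set.Icc (-(n : ℤ)) n).ncard : ℕ) : ℤ) = windowCount n (· ∈ D) := by
  classical
  unfold windowCount
  rw [← Set.ncard_coe_finset]
  congr 2
  ext m
  simp only [Set.mem_inter_iff, Set.mem_Icc, Finset.coe_filter, Finset.mem_Icc]
  exact and_comm

end WindowCount

section LowerDensity

lemma tendsto_add_div_two_mul_add_one (c C : ℝ) :
    Tendsto (fun n : ℕ => c + C / (2 * (n : ℝ) + 1)) atTop (nhds c) := by
  have h : Tendsto (fun n : ℕ => 2 * (n : ℝ) + 1) atTop atTop :=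
    tendsto_atTop_add_const_right _ _ (tendsto_natCast_atTop_atTop.const_mul_atTop two_pos)
  simpa using (h.const_div_atTop C).const_add c

lemma ncard_inter_Icc_div_le_one (D : Set ℤ) (n : ℕ) :
    ((D ∩ Set.Icc (-(n : ℤ)) n).ncard : ℝ) / (2 * (n : ℝ) + 1) ≤ 1 := by
  rw [div_le_one (by positivity)]
  have h : windowCount n (· ∈ D) ≤ 2 * n + 1 :=
    (windowCount_mono fun _ _ => trivial).trans windowCount_true.le
  rw [← ncard_inter_Icc_eq_windowCount] at h
  exact_mod_cast h

lemma isBoundedUnder_le_density (D : Set ℤ) :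
    IsBoundedUnder (· ≤ ·) atTop (fun n : ℕ =>
      ((D ∩ Set.Icc (-(n : ℤ)) n).ncard : ℝ) / (2 * (n : ℝ) + 1)) :=
  isBoundedUnder_of ⟨1, ncard_inter_Icc_div_le_one D⟩

lemma isBoundedUnder_ge_density (D : Set ℤ) :
    IsBoundedUnder (· ≥ ·) atTop (fun n : ℕ =>
      ((D ∩ Set.Icc (-(n : ℤ)) n).ncard : ℝ) / (2 * (n : ℝ) + 1)) :=
  isBoundedUnder_of ⟨0, fun n => by positivity⟩

lemma le_lowerDensity_s11 {D : Set ℤ} {a b C : ℤ} (hb : 0 < b)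
    (h : ∀ n : ℕ, a * (2 * n + 1) ≤ b * windowCount n (· ∈ D) + C) :
    (a : ℝ) / b ≤ lowerDensity D := by
  have hb' : (0 : ℝ) < b := by exact_mod_cast hb
  have hlim := tendsto_add_div_two_mul_add_one ((a : ℝ) / b) (-C / b)
  rw [← hlim.liminf_eq]
  refine liminf_le_liminf (Eventually.of_forall fun n => ?_) hlim.isBoundedUnder_ge
    (isBoundedUnder_le_density D).isCoboundedUnder_ge
  have hn := h n
  rw [← ncard_inter_Icc_eq_windowCount] at hn
  have hn' : (a : ℝ) * (2 * n + 1) ≤ b * ((D ∩ Set.Icc (-(n : ℤ)) n).ncard : ℝ) + C := by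
    exact_mod_cast hn
  have hL : (0 : ℝ) < 2 * n + 1 := by positivity
  have heq : (a : ℝ) / b + -C / b / (2 * n + 1) = ((a * (2 * n + 1) - C) / b) / (2 * n + 1) := by
    field_simp
    ring
  rw [heq]
  refine div_le_div_of_nonneg_right ?_ hL.le
  rw [div_le_iff₀ hb']
  linarith

lemma lowerDensity_le_s11 {D : Set ℤ} {a b C : ℤ} (hb : 0 < b)
    (h : ∀ n : ℕ, b * windowCount n (· ∈ D) ≤ a * (2 * n + 1) + C) :
    lowerDensity D ≤ (a : ℝ) / b := by
  have hb' : (0 : ℝ) < b := by exact_mod_cast hb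
  have hlim := tendsto_add_div_two_mul_add_one ((a : ℝ) / b) (C / b)
  rw [← hlim.liminf_eq]
  refine liminf_le_liminf (Eventually.of_forall fun n => ?_) (isBoundedUnder_ge_density D)
    hlim.isBoundedUnder_le.isCoboundedUnder_ge
  have hn := h n
  rw [← ncard_inter_Icc_eq_windowCount] at hn
  have hn' : (b : ℝ) * ((D ∩ Set.Icc (-(n : ℤ)) n).ncard : ℝ) ≤ a * (2 * n + 1) + C := by
    exact_mod_cast hn
  have hL : (0 : ℝ) < 2 * n + 1 := by positivity
  have heq : (a : ℝ) / b + C / b / (2 * n + 1) = ((a * (2 * n + 1) + C) / b) / (2 * n + 1) := by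
    field_simp
  rw [heq]
  refine div_le_div_of_nonneg_right ?_ hL.le
  rw [le_div_iff₀ hb']
  linarith

open Pointwise in
lemma lowerDensity_neg (D : Set ℤ) : lowerDensity (-D) = lowerDensity D := by
  unfold lowerDensity
  congr 1
  funext n
  have h : -D ∩ Set.Icc (-(n : ℤ)) n = -(D ∩ Set.Icc (-(n : ℤ)) n) := by
    ext m
    simp only [Set.mem_inter_iff, Set.mem_neg, Set.mem_Icc]
    refine and_congr_right fun _ => ?_
    omega
  rw [h, ← Set.image_neg_eq_neg, Set.ncard_image_of_injective _ neg_injective]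

end LowerDensity

section Dominating

open Pointwise in
/-- Reflection `D ↦ -D` exchanges the shifts `{0, 1, s}` and `{0, 1, 1 - s}` up to translation. -/
lemma Dominating.neg {s : ℤ} {D : Set ℤ} (h : Dominating {1, s} D) :
    Dominating {1, 1 - s} (-D) := by
  rw [dominating_pair_iff] at h ⊢
  intro m
  simp only [Set.mem_neg]
  have hm := h (1 - m)
  rw [show 1 - m - 1 = -m by ring, show 1 - m - s = -(m - (1 - s)) by ring] at hm
  rw [show -(m - 1) = 1 - m by ring]
  tauto

lemma dominationRatio_one_sub (s : ℤ) :
    dominationRatio {1, 1 - s} = dominationRatio {1, s} := by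
  unfold dominationRatio
  congr 1
  ext x
  constructor
  · rintro ⟨D, hD, rfl⟩
    exact ⟨-D, by simpa using Dominating.neg hD, lowerDensity_neg D⟩
  · rintro ⟨D, hD, rfl⟩
    exact ⟨-D, Dominating.neg hD, lowerDensity_neg D⟩

/-- A dominating set for `{1, 3k}` has at least `2k / (6k - 1)` of each window, up to a bounded
error. Gaps of length `g ≥ 4` between consecutive elements are paid for by `g - 3` gaps of
length one, and a run of `k` gaps of length three forces an additional gap of length one. -/
lemma Dominating.le_windowCount {k : ℕ} (hk : 1 ≤ k) {D : Set ℤ}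
    (hD : Dominating {1, 3 * (k : ℤ)} D) :
    ∃ C : ℤ, ∀ n : ℕ, 2 * k * (2 * n + 1) ≤ (6 * k - 1) * windowCount n (· ∈ D) + C := by
  rw [dominating_pair_iff] at hD
  let X : ℤ → Prop := fun m => m ∉ D ∧ m - 1 ∉ D ∧ m - 2 ∉ D
  let P : ℤ → Prop := fun m => m ∈ D ∧ m - 1 ∈ D
  let Q : ℤ → Prop := fun m => (m - 2 ∈ D ∧ m - 1 ∉ D) ∧ m ∈ D
  let U : ℤ → Prop := fun m => P m ∧ ¬ X (m + 3 * k)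
  let B : ℤ → Prop := fun d => d ∈ D ∧ (d + 1 ∈ D ∨ d + 2 ∈ D ∨ d + 3 ∉ D)
  have hXP : ∀ m, X (m + 3 * k) → P m ∧ X (m + 3 * k) := by
    intro m hX
    refine ⟨⟨?_, ?_⟩, hX⟩
    · have h := hD (m + 3 * k)
      rw [show m + 3 * (k : ℤ) - 3 * k = m by ring] at h
      exact (h.resolve_left hX.1).resolve_left hX.2.1
    · have h := hD (m + 3 * k - 1)
      rw [show m + 3 * (k : ℤ) - 1 - 3 * k = m - 1 by ring,
        show m + 3 * (k : ℤ) - 1 - 1 = m + 3 * k - 2 by ring] at h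
      exact (h.resolve_left hX.2.1).resolve_left hX.2.2
  have hBU : ∀ d, d ∈ D → (∃ j < k, B (d + 3 * (j : ℤ))) ∨ U d := by
    intro d hd
    by_cases hB : ∃ j < k, B (d + 3 * (j : ℤ))
    · exact Or.inl hB
    refine Or.inr ?_
    push Not at hB
    have hmem : ∀ j : ℕ, j ≤ k → d + 3 * (j : ℤ) ∈ D := by
      intro j
      induction j with
      | zero => simpa using hd
      | succ j ih =>
        intro hj
        have h := hB j (by omega)
        by_contra hj'
        refine h ⟨ih (by omega), Or.inr (Or.inr ?_)⟩
        convert hj' using 2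
        push_cast
        ring
    obtain ⟨l, rfl⟩ : ∃ l, k = l + 1 := ⟨k - 1, by omega⟩
    have hl := hmem l (by omega)
    have hk' := hmem (l + 1) le_rfl
    have hgood := hB l (by omega)
    have h₁ : d + 3 * (l : ℤ) + 1 ∉ D := fun h => hgood ⟨hl, Or.inl h⟩
    have h₂ : d + 3 * (l : ℤ) + 2 ∉ D := fun h => hgood ⟨hl, Or.inr (Or.inl h)⟩
    have h := hD (d + 3 * (l : ℤ) + 2)
    rw [show d + 3 * (l : ℤ) + 2 - 1 = d + 3 * (l : ℤ) + 1 by ring,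
      show d + 3 * (l : ℤ) + 2 - 3 * ((l + 1 : ℕ) : ℤ) = d - 1 by push_cast; ring] at h
    exact ⟨⟨hd, (h.resolve_left h₂).resolve_left h₁⟩, fun hX => hX.1 hk'⟩
  refine ⟨2 * k * (3 * k + 10) + 3 * k * (k + 3) + 3 * k * k + 10 * k, fun n => ?_⟩
  have hX : windowCount n X ≤ windowCount n (fun m => P m ∧ X (m + 3 * k)) + 3 * k := by
    have h₁ := windowCount_le_shift (n := n) X (3 * k)
    have h₂ := windowCount_mono (n := n) hXP
    rw [abs_of_nonneg (by positivity)] at h₁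
    linarith
  have hPU := windowCount_add_windowCount_not (n := n) P (fun m => X (m + 3 * k))
  change _ + windowCount n U = _ at hPU
  have hlen : 2 * (n : ℤ) + 1 ≤ 3 * windowCount n (· ∈ D) - 2 * windowCount n P
      - windowCount n Q + windowCount n X + 4 := by
    have hT := windowCount_true (n := n)
    have h₁ := windowCount_or_le (n := n) (P := fun _ => True) (Q := fun m => m ∈ D)
      (R := fun m => m ∉ D) (fun m _ => em _)
    have h₂ := windowCount_or_le (n := n) (P := fun m => m ∉ D)
      (Q := fun m => m - 1 ∈ D ∧ ¬ m ∈ D) (R := fun m => m ∉ D ∧ m - 1 ∉ D)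
      (fun m h => by tauto)
    have h₃ := windowCount_or_le (n := n) (P := fun m => m ∉ D ∧ m - 1 ∉ D)
      (Q := fun m => (m - 2 ∈ D ∧ ¬ m - 1 ∈ D) ∧ ¬ m ∈ D) (R := X)
      (fun m h => by simp only [X]; tauto)
    have h₄ := windowCount_add_windowCount_not (n := n) (fun m => m - 1 ∈ D) (fun m => m ∈ D)
    have h₅ := windowCount_add_windowCount_not (n := n) (fun m => m - 2 ∈ D ∧ ¬ m - 1 ∈ D)
      (fun m => m ∈ D)
    have h₆ := windowCount_add_windowCount_not (n := n) (fun m => m - 2 ∈ D)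
      (fun m => m - 1 ∈ D)
    have h₇ : windowCount n P ≤ windowCount n (fun m => m - 1 ∈ D ∧ m ∈ D) :=
      windowCount_mono fun m h => h.symm
    have h₈ : windowCount n P ≤ windowCount n (fun m => m - 2 ∈ D ∧ m - 1 ∈ D) + 1 := by
      refine (windowCount_le_shift (n := n) P (-1)).trans ?_
      have : windowCount n (fun m => P (m + -1)) ≤
          windowCount n (fun m => m - 2 ∈ D ∧ m - 1 ∈ D) := by
        refine windowCount_mono fun m h => ?_
        obtain ⟨ha, hb⟩ := h
        rw [show m + -1 - 1 = m - 2 by ring] at hb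
        exact ⟨hb, ha⟩
      simpa using this
    have h₉ := windowCount_shift_le (n := n) (· ∈ D) (-1)
    have h₁₀ := windowCount_shift_le (n := n) (· ∈ D) (-2)
    simp only [← sub_eq_add_neg, abs_neg, abs_one, Nat.abs_ofNat] at h₉ h₁₀
    change windowCount n Q + _ = _ at h₅
    linarith
  have hB : windowCount n B ≤ windowCount n P + windowCount n Q + windowCount n X + 6 := by
    have h₁ := windowCount_or_le (n := n) (P := B) (Q := fun m => P (m + 1))
      (R := fun m => Q (m + 2) ∨ X (m + 3)) (fun m h => by
        simp only [P, Q, X, show m + 1 - 1 = m by ring, show m + 2 - 2 = m by ring,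
          show m + 2 - 1 = m + 1 by ring, show m + 3 - 1 = m + 2 by ring,
          show m + 3 - 2 = m + 1 by ring]
        simp only [B] at h
        tauto)
    have h₂ := windowCount_or_le (n := n) (P := fun m => Q (m + 2) ∨ X (m + 3))
      (Q := fun m => Q (m + 2)) (R := fun m => X (m + 3)) (fun m h => h)
    have h₃ := windowCount_shift_le (n := n) P 1
    have h₄ := windowCount_shift_le (n := n) Q 2
    have h₅ := windowCount_shift_le (n := n) X 3
    simp only [abs_one, Nat.abs_ofNat] at h₃ h₄ h₅
    linarith
  have hcount : windowCount n (· ∈ D) ≤ k * (windowCount n B + 3 * k) + windowCount n U := by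
    have h₁ := windowCount_or_le (n := n) hBU
    have h₂ := windowCount_exists_lt_le (n := n) (fun j d => B (d + 3 * (j : ℤ))) k
    have h₃ : ∑ j ∈ Finset.range k, windowCount n (fun d => B (d + 3 * (j : ℤ))) ≤
        ∑ _j ∈ Finset.range k, (windowCount n B + 3 * k) := by
      refine Finset.sum_le_sum fun j hj => ?_
      have h := windowCount_shift_le (n := n) B (3 * (j : ℤ))
      rw [abs_of_nonneg (by positivity)] at h
      have := Finset.mem_range.mp hj
      omega
    rw [Finset.sum_const, Finset.card_range, nsmul_eq_mul] at h₃
    linarith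
  have hU : 0 ≤ windowCount n U := windowCount_nonneg
  have hQ : 0 ≤ windowCount n Q := windowCount_nonneg
  have hk' : (1 : ℤ) ≤ k := by exact_mod_cast hk
  generalize windowCount n (· ∈ D) = d at *
  generalize windowCount n P = p at *
  generalize windowCount n Q = q at *
  generalize windowCount n X = x at *
  generalize windowCount n U = u at *
  generalize windowCount n B = b at *
  generalize windowCount n _ = a at *
  have hk₀ : (0 : ℤ) ≤ k := by linarith
  have hb' := mul_le_mul_of_nonneg_left (hB.trans (add_le_add_left (add_le_add_right hX _) _)) hk₀
  have hl' := mul_le_mul_of_nonneg_left (hlen.trans (add_le_add_left (add_le_add_right hX _) _)) hk₀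
  have hp' : (k : ℤ) * (a + u) = k * p := by rw [hPU]
  nlinarith [mul_nonneg hk₀ hQ, mul_nonneg hk₀ hU, mul_nonneg (sub_nonneg.mpr hk') hU]

/-- The residues `3k · {0, 3, …, 6k - 3}` modulo `6k - 1`; multiplication by `2` inverts
multiplication by `3k`. -/
def cyclicDominatingSet (k : ℤ) : Set ℤ :=
  {m | 3 ∣ (2 * m) % (6 * k - 1)}

lemma mem_cyclicDominatingSet_sub {k : ℤ} (hk : 1 ≤ k) (m : ℤ) :
    (m - 1 ∈ cyclicDominatingSet k ↔
      (2 * m % (6 * k - 1) = 0 ∨ 2 * m % (6 * k - 1) % 3 = 2)) ∧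
    (m - 3 * k ∈ cyclicDominatingSet k ↔ 2 * m % (6 * k - 1) % 3 = 1) := by
  have h₀ := Int.emod_nonneg (2 * m) (show 6 * k - 1 ≠ 0 by omega)
  have h₁ := Int.emod_lt_of_pos (2 * m) (show 0 < 6 * k - 1 by omega)
  have e₁ : 2 * (m - 1) % (6 * k - 1) = (2 * m % (6 * k - 1) - 2) % (6 * k - 1) := by
    rw [Int.emod_sub_emod]
    congr 1
    ring
  have e₂ : 2 * (m - 3 * k) % (6 * k - 1) = (2 * m % (6 * k - 1) - 1) % (6 * k - 1) := by
    rw [Int.emod_sub_emod, ← Int.sub_emod_right (2 * m - 1)]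
    congr 1
    ring
  simp only [cyclicDominatingSet, Set.mem_ofPred_eq, e₁, e₂]
  generalize 2 * m % (6 * k - 1) = r at *
  have reduce : ∀ x : ℤ, -(6 * k - 1) ≤ x → x < 6 * k - 1 →
      x % (6 * k - 1) = if 0 ≤ x then x else x + (6 * k - 1) := by
    intro x hx hx'
    split_ifs with h
    · exact Int.emod_eq_of_lt h hx'
    · rw [← Int.add_emod_right, Int.emod_eq_of_lt (by omega) (by omega)]
  rw [reduce _ (by omega) (by omega), reduce _ (by omega) (by omega)]
  constructor <;> split_ifs <;> omega

lemma dominating_cyclicDominatingSet {k : ℤ} (hk : 1 ≤ k) :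
    Dominating {1, 3 * k} (cyclicDominatingSet k) := by
  rw [dominating_pair_iff]
  intro m
  rw [(mem_cyclicDominatingSet_sub hk m).1, (mem_cyclicDominatingSet_sub hk m).2]
  simp only [cyclicDominatingSet, Set.mem_ofPred_eq]
  omega

lemma windowCount_cyclicDominatingSet_le {k : ℤ} (hk : 1 ≤ k) (n : ℕ) :
    (6 * k - 1) * windowCount n (· ∈ cyclicDominatingSet k) ≤
      2 * k * (2 * n + 1) + (6 * k - 1) * (3 * k + 2) := by
  set D := cyclicDominatingSet k with hDdef
  have hmem := mem_cyclicDominatingSet_sub hk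
  rw [← hDdef] at hmem
  have hmem₀ : ∀ m, m ∈ D ↔ 2 * m % (6 * k - 1) % 3 = 0 := fun m => by
    simp only [hDdef, cyclicDominatingSet, Set.mem_ofPred_eq]
    omega
  have hdvd : ∀ m, 2 * m % (6 * k - 1) = 0 → 6 * k - 1 ∣ m := by
    intro m h
    have h' := (Int.dvd_of_emod_eq_zero h).mul_left (3 * k)
    have : m = 3 * k * (2 * m) - (6 * k - 1) * m := by ring
    rw [this]
    exact dvd_sub h' (dvd_mul_right _ _)
  have hT := windowCount_true (n := n)
  have h₁ := windowCount_add_windowCount_not (n := n) (fun _ => True) (· ∈ D)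
  have h₂ := windowCount_add_windowCount_not (n := n) (· ∉ D) (fun m => m - 3 * k ∈ D)
  have h₃ : windowCount n (fun m => m - 3 * k ∈ D) ≤
      windowCount n (fun m => m ∉ D ∧ m - 3 * k ∈ D) :=
    windowCount_mono fun m h => ⟨by rw [(hmem m).2] at h; rw [hmem₀]; omega, h⟩
  have h₄ := windowCount_or_le (n := n) (P := fun m => m - 1 ∈ D)
    (Q := fun m => m ∉ D ∧ ¬ m - 3 * k ∈ D) (R := fun m => 6 * k - 1 ∣ m) (fun m h => by
      rw [(hmem m).1] at h
      rcases h with h | h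
      · exact Or.inr (hdvd m h)
      · refine Or.inl ⟨?_, ?_⟩
        · rw [hmem₀]; omega
        · rw [(hmem m).2]; omega)
  have h₅ := windowCount_dvd_le (n := n) (show 0 < 6 * k - 1 by omega)
  have h₆ := windowCount_le_shift (n := n) (· ∈ D) (-1)
  have h₇ := windowCount_le_shift (n := n) (· ∈ D) (-(3 * k))
  rw [abs_neg, abs_of_nonneg (by omega : 0 ≤ 3 * k)] at h₇
  simp only [← sub_eq_add_neg, abs_neg, abs_one, true_and] at h₁ h₆ h₇
  have hkey : 3 * windowCount n (· ∈ D) ≤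
      2 * n + 1 + windowCount n (fun m => 6 * k - 1 ∣ m) + 3 * k + 1 := by
    linarith
  nlinarith [mul_le_mul_of_nonneg_left hkey (show 0 ≤ 6 * k - 1 by omega)]

lemma dominationRatio_one_three_mul {k : ℤ} (hk : 1 ≤ k) :
    dominationRatio {1, 3 * k} = 2 * (k : ℝ) / (6 * (k : ℝ) - 1) := by
  have hcast : 2 * (k : ℝ) / (6 * (k : ℝ) - 1) = ((2 * k : ℤ) : ℝ) / ((6 * k - 1 : ℤ) : ℝ) := by
    push_cast
    rfl
  have hpos : 0 < 6 * k - 1 := by omega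
  have hle : ∀ D, Dominating {1, 3 * k} D →
      2 * (k : ℝ) / (6 * (k : ℝ) - 1) ≤ lowerDensity D := by
    intro D hD
    rw [hcast]
    lift k to ℕ using by omega
    obtain ⟨C, hC⟩ := Dominating.le_windowCount (by exact_mod_cast hk) hD
    exact le_lowerDensity_s11 hpos hC
  refine IsLeast.csInf_eq ⟨⟨cyclicDominatingSet k, dominating_cyclicDominatingSet hk,
    le_antisymm ?_ (hle _ (dominating_cyclicDominatingSet hk))⟩, ?_⟩
  · rw [hcast]
    exact lowerDensity_le_s11 hpos (windowCount_cyclicDominatingSet_le hk)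
  · rintro _ ⟨D, hD, rfl⟩
    exact hle D hD

end Dominating

theorem stmt_11 (k : ℤ) (hk : 1 ≤ k) :
    dominationRatio {1, 3 * k} = 2 * (k : ℝ) / (6 * (k : ℝ) - 1) ∧
      (2 ≤ k → dominationRatio {1, -3 * k + 1} = 2 * (k : ℝ) / (6 * (k : ℝ) - 1)) := by
  refine ⟨dominationRatio_one_three_mul hk, fun _ => ?_⟩
  rw [show -3 * k + 1 = 1 - 3 * k by ring, dominationRatio_one_sub]
  exact dominationRatio_one_three_mul hk
end
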